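/- Shift estimate for functions of finite generalized Dirichlet energy (key estimate in the proof of Theorem 4.5): Let m and ν be positive Radon measures on ℝ charging no singleton, let ε > 0, and let f : [0,∞) → ℝ satisfy f(y) − f(x) = ∫_{(x,y]} h dν for all 0 ≤ x < y, where h is measurable with ∫_{(0,∞)} h² dν < ∞. Then ∫_{[0,∞)} (f(x+ε) − f(x))² m(dx) ≤ (sup_{x≥0} ν((x, x+ε])) · (sup_{y>0} m([y−ε, y])) · ∫_{(0,∞)} h² dν. -/

import Mathlib

/-!
By Cauchy–Schwarz, `(f (x + ε) - f x)²` is at most `ν (x, x + ε]` times the integral of `h²` over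
`(x, x + ε]` (`sq_setIntegral_le`). By Tonelli, integrating that integral over `x ≥ 0` against `m`
gives each `t > 0` the weight `m ([t - ε, t) ∩ [0, ∞)) ≤ m [t - ε, t]` (`lintegral_window_le`).
The estimates are carried out in `ℝ≥0∞`, so the suprema are allowed to be infinite.
-/

open MeasureTheory Filter Set Topology
open scoped ENNReal NNReal

noncomputable section

/-- Cauchy–Schwarz for the pair `h`, `1` on `s`. Integrability of `h` is not needed: otherwise the
Bochner integral on the left is `0`. -/
theorem sq_setIntegral_le (ν : Measure ℝ) (h : ℝ → ℝ) (hmeas : Measurable h) (s : Set ℝ) :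
    ENNReal.ofReal ((∫ t in s, h t ∂ν) ^ 2) ≤
      ν s * ∫⁻ t in s, ENNReal.ofReal (h t ^ 2) ∂ν := by
  have hsq : ∀ a : ℝ, ENNReal.ofReal (a ^ 2) = ‖a‖ₑ ^ (2 : ℝ) := fun a => by
    rw [ENNReal.rpow_two, Real.enorm_eq_ofReal_abs, ← ENNReal.ofReal_pow (abs_nonneg a), sq_abs]
  have hCS := ENNReal.lintegral_mul_le_Lp_mul_Lq (ν.restrict s) Real.HolderConjugate.two_two
    (f := fun t => ‖h t‖ₑ) (g := fun _ => 1) hmeas.enorm.aemeasurable aemeasurable_const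
  simp only [Pi.mul_apply, mul_one, ENNReal.one_rpow, lintegral_const, one_mul,
    Measure.restrict_apply_univ] at hCS
  simp only [hsq]
  calc ‖∫ t in s, h t ∂ν‖ₑ ^ (2 : ℝ)
      ≤ ((∫⁻ t in s, ‖h t‖ₑ ^ (2 : ℝ) ∂ν) ^ (1 / 2 : ℝ) * ν s ^ (1 / 2 : ℝ)) ^ (2 : ℝ) := by
        gcongr
        exact (enorm_integral_le_lintegral_enorm _).trans hCS
    _ = ν s * ∫⁻ t in s, ‖h t‖ₑ ^ (2 : ℝ) ∂ν := by
        rw [ENNReal.mul_rpow_of_nonneg _ _ (by norm_num), ← ENNReal.rpow_mul,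
          ← ENNReal.rpow_mul, mul_comm]
        norm_num

theorem measurable_window (ε : ℝ) {g : ℝ → ℝ≥0∞} (hg : Measurable g) :
    Measurable fun p : ℝ × ℝ => (Ioc p.1 (p.1 + ε)).indicator g p.2 := by
  have hS : MeasurableSet {p : ℝ × ℝ | p.1 < p.2 ∧ p.2 ≤ p.1 + ε} :=
    (measurableSet_lt measurable_fst measurable_snd).inter
      (measurableSet_le measurable_snd (measurable_fst.add_const ε))
  exact (hg.comp measurable_snd).indicator hS

/-- Tonelli for moving windows: for fixed `t`, the points `x` with `t ∈ (x, x + ε]` all lie in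
`[t - ε, t]`. -/
theorem lintegral_window_le (m ν : Measure ℝ) [SFinite m] [SFinite ν] (ε : ℝ)
    {g : ℝ → ℝ≥0∞} (hg : Measurable g) :
    ∫⁻ x in Ici 0, ∫⁻ t in Ioc x (x + ε), g t ∂ν ∂m ≤
      (⨆ y ∈ Ioi (0 : ℝ), m (Icc (y - ε) y)) * ∫⁻ t in Ioi 0, g t ∂ν := by
  -- The inner integral is moved to a domain independent of `x`, so that the order can be swapped.
  have hwin : ∀ x ∈ Ici (0 : ℝ), ∫⁻ t in Ioc x (x + ε), g t ∂ν =
      ∫⁻ t in Ioi 0, (Ioc x (x + ε)).indicator g t ∂ν := fun x hx => by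
    rw [setLIntegral_indicator measurableSet_Ioc,
      inter_eq_self_of_subset_left
        (show Ioc x (x + ε) ⊆ Ioi 0 from fun t ht => lt_of_le_of_lt hx ht.1)]
  rw [setLIntegral_congr_fun measurableSet_Ici hwin,
    lintegral_lintegral_swap (measurable_window ε hg).aemeasurable, ← lintegral_const_mul _ hg]
  refine setLIntegral_mono (hg.const_mul _) fun t ht => ?_
  calc ∫⁻ x in Ici 0, (Ioc x (x + ε)).indicator g t ∂m
      ≤ ∫⁻ x, (Icc (t - ε) t).indicator (fun _ => g t) x ∂m := by
        refine (setLIntegral_le_lintegral _ _).trans (lintegral_mono fun x => ?_)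
        by_cases hx : t ∈ Ioc x (x + ε)
        · have hx' : x ∈ Icc (t - ε) t := ⟨by linarith [hx.2], hx.1.le⟩
          simp [indicator_of_mem hx, indicator_of_mem hx']
        · simp [indicator_of_notMem hx]
    _ = m (Icc (t - ε) t) * g t := by
        rw [lintegral_indicator_const measurableSet_Icc, mul_comm]
    _ ≤ (⨆ y ∈ Ioi (0 : ℝ), m (Icc (y - ε) y)) * g t := by
        gcongr
        exact le_iSup₂ (f := fun y (_ : y ∈ Ioi (0 : ℝ)) => m (Icc (y - ε) y)) t ht

/-- Key estimate in the proof of Theorem 4.5 (shift estimate): if `f` has ν-density `h`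
on `[0,∞)` with `∫_{(0,∞)} h² dν < ∞`, then
`∫_{[0,∞)} (f(x+ε)−f(x))² m(dx)
  ≤ (sup_{x≥0} ν((x,x+ε])) (sup_{y>0} m([y−ε,y])) ∫_{(0,∞)} h² dν`. -/
theorem shift_energy_estimate
    (m ν : Measure ℝ) [IsLocallyFiniteMeasure m] [IsLocallyFiniteMeasure ν]
    (hmatom : ∀ x : ℝ, m {x} = 0) (hνatom : ∀ x : ℝ, ν {x} = 0)
    (ε : ℝ) (hε : 0 < ε) (f h : ℝ → ℝ) (hmeas : Measurable h)
    (hAC : ∀ x y : ℝ, 0 ≤ x → x < y →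
      IntegrableOn h (Set.Ioc x y) ν ∧ f y - f x = ∫ t in Set.Ioc x y, h t ∂ν)
    (hL2 : ∫⁻ t in Set.Ioi 0, ENNReal.ofReal (h t ^ 2) ∂ν < ⊤) :
    ∫⁻ x in Set.Ici 0, ENNReal.ofReal ((f (x + ε) - f x) ^ 2) ∂m ≤
      (⨆ x ∈ Set.Ici (0 : ℝ), ν (Set.Ioc x (x + ε))) *
        (⨆ y ∈ Set.Ioi (0 : ℝ), m (Set.Icc (y - ε) y)) *
        ∫⁻ t in Set.Ioi 0, ENNReal.ofReal (h t ^ 2) ∂ν := by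
  have hg : Measurable fun t => ENNReal.ofReal (h t ^ 2) := (hmeas.pow_const 2).ennreal_ofReal
  have hwin : Measurable fun x => ∫⁻ t in Ioc x (x + ε), ENNReal.ofReal (h t ^ 2) ∂ν := by
    simp only [← lintegral_indicator measurableSet_Ioc]
    exact (measurable_window ε hg).lintegral_prod_right'
  calc ∫⁻ x in Ici 0, ENNReal.ofReal ((f (x + ε) - f x) ^ 2) ∂m
      ≤ ∫⁻ x in Ici 0, (⨆ x ∈ Ici (0 : ℝ), ν (Ioc x (x + ε))) *
          ∫⁻ t in Ioc x (x + ε), ENNReal.ofReal (h t ^ 2) ∂ν ∂m := by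
        refine setLIntegral_mono (hwin.const_mul _) fun x hx => ?_
        rw [(hAC x (x + ε) hx (by linarith)).2]
        refine (sq_setIntegral_le ν h hmeas _).trans ?_
        gcongr
        exact le_iSup₂ (f := fun x (_ : x ∈ Ici (0 : ℝ)) => ν (Ioc x (x + ε))) x hx
    _ ≤ _ := by
        rw [lintegral_const_mul _ hwin, mul_assoc]
        gcongr
        exact lintegral_window_le m ν ε hg

end
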